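/- The invariant I_4 is the following explicit quadratic polynomial in the split Casimir element: I_4 = 1024(r−1)^2·Ĉ^2 + 256(r−1)^2·Ĉ − 4r(2r−1)·I_0 in Cl ⊗ Cl. -/

import Mathlib

open scoped TensorProduct

noncomputable section

/-- The quadratic form `x₁² + ⋯ + x_{2r}²` on `ℂ^{2r}`. -/
def Qf (r : ℕ) : QuadraticForm ℂ (Fin (2*r) → ℂ) :=
  QuadraticMap.weightedSumSquares ℂ (fun _ : Fin (2*r) => (1:ℂ))

/-- The Clifford algebra of `Qf r`. -/
abbrev Cl (r : ℕ) := CliffordAlgebra (Qf r)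

/-- The generators `Γ_i`. -/
def Γgen (r : ℕ) (i : Fin (2*r)) : Cl r :=
  CliffordAlgebra.ι (Qf r) (Pi.single i 1)

/-- The antisymmetrised products `Γ_{[i₁…i_k]}`. -/
def Γbr (r k : ℕ) (i : Fin k → Fin (2*r)) : Cl r :=
  ((k.factorial : ℂ))⁻¹ •
    ∑ σ : Equiv.Perm (Fin k),
      ((Equiv.Perm.sign σ : ℤ) : ℂ) • (List.ofFn fun j => Γgen r (i (σ j))).prod

/-- The invariants `I_k ∈ Cl ⊗ Cl`. -/
def Ik (r k : ℕ) : Cl r ⊗[ℂ] Cl r :=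
  ∑ i : Fin k → Fin (2*r), (Γbr r k i) ⊗ₜ[ℂ] (Γbr r k i)

/-- The split Casimir element `Ĉ = −I₂/(16(2r−2))`. -/
def sC (r : ℕ) : Cl r ⊗[ℂ] Cl r := (-(16*(2*(r:ℂ)-2))⁻¹) • Ik r 2

/-- The top element `Γ_{2r+1} = (−i)^r Γ₁⋯Γ_{2r}`. -/
def Γtop (r : ℕ) : Cl r :=
  ((-Complex.I)^r) • (List.ofFn fun i : Fin (2*r) => Γgen r i).prod

/-- The chirality projector `p_ε = (1 + ε Γ_{2r+1})/2`. -/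
def pCh (r : ℕ) (ε : ℂ) : Cl r := (2:ℂ)⁻¹ • (1 + ε • Γtop r)

/-- The chirality projectors `p_{εε'} = p_ε ⊗ p_{ε'}`. -/
def ppCh (r : ℕ) (ε ε' : ℂ) : Cl r ⊗[ℂ] Cl r := (pCh r ε) ⊗ₜ[ℂ] (pCh r ε')

/-- The eigenvalues `c_k = (2k(2r−k) − r(2r−1))/(16(r−1))`. -/
def cEv (r k : ℕ) : ℂ :=
  (2*(k:ℂ)*(2*(r:ℂ)-(k:ℂ)) - (r:ℂ)*(2*(r:ℂ)-1)) / (16*((r:ℂ)-1))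

/-- The spectral projectors `P_k = Π_{j≠k} (Ĉ − c_j)/(c_k − c_j)`. -/
def Pk (r k : ℕ) : Cl r ⊗[ℂ] Cl r :=
  (((List.range (r+1)).filter (fun j => j ≠ k)).map
    (fun j => (cEv r k - cEv r j)⁻¹ • (sC r - cEv r j • 1))).prod

/-- `P_r^S = (p_{++} + p_{−−})·P_r`. -/
def PrS (r : ℕ) : Cl r ⊗[ℂ] Cl r := (ppCh r 1 1 + ppCh r (-1) (-1)) * Pk r r

/-- The ascending factorial `a_k(u) = (u/2)(u/2+1)⋯(u/2+k−1)`. -/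
def asc (u : ℂ) (k : ℕ) : ℂ := ∏ j ∈ Finset.range k, (u/2 + (j:ℂ))

/-- A product of pairwise anticommuting elements changes sign when two adjacent factors are
exchanged. -/
theorem prod_ofFn_swap_of_anticomm {A : Type*} [Ring A] {n : ℕ} (f : Fin (n + 1) → A)
    (hf : ∀ i j, i ≠ j → f i * f j = -(f j * f i)) (j : Fin n) :
    (List.ofFn fun l => f (Equiv.swap j.castSucc j.succ l)).prod = -(List.ofFn f).prod := by
  induction n with
  | zero => exact j.elim0
  | succ n ih =>
    cases j using Fin.cases with
    | zero =>
      have h (i : Fin n) : Equiv.swap (0 : Fin (n + 2)) 1 i.succ.succ = i.succ.succ :=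
        Equiv.swap_apply_of_ne_of_ne (by simp) (by simp [Fin.ext_iff])
      have h01 : (0 : Fin (n + 2)) ≠ 1 := by simp
      simp [List.ofFn_succ, h, ← mul_assoc, hf 1 0 h01.symm]
    | succ j =>
      have h0 : Equiv.swap j.succ.castSucc j.succ.succ 0 = 0 :=
        Equiv.swap_apply_of_ne_of_ne (by simp [Fin.ext_iff]) (by simp [Fin.ext_iff])
      have hs (l : Fin (n + 1)) : Equiv.swap j.succ.castSucc j.succ.succ l.succ =
          (Equiv.swap j.castSucc j.succ l).succ :=
        ((Fin.succ_injective _).swap_apply j.castSucc j.succ l)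
      have := ih (fun l => f l.succ) (fun a b hab => hf _ _ (by simpa using hab)) j
      rw [List.ofFn_succ, List.ofFn_succ (f := f), List.prod_cons, List.prod_cons, h0]
      simp only [hs]
      rw [this, mul_neg]

/-- A product of pairwise anticommuting elements is alternating in its factors. -/
theorem prod_ofFn_perm_of_anticomm {A : Type*} [Ring A] {n : ℕ} (f : Fin n → A)
    (hf : ∀ i j, i ≠ j → f i * f j = -(f j * f i)) (σ : Equiv.Perm (Fin n)) :
    (List.ofFn fun l => f (σ l)).prod = ((Equiv.Perm.sign σ : ℤ) : A) * (List.ofFn f).prod := by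
  cases n with
  | zero => simp [Subsingleton.elim σ 1]
  | succ n =>
    have hσ : σ ∈ Submonoid.closure
        (Set.range fun i : Fin n => Equiv.swap i.castSucc i.succ) := by
      rw [Equiv.Perm.mclosure_swap_castSucc_succ]; trivial
    induction hσ using Submonoid.closure_induction_right with
    | one => simp
    | mul_right τ _ s hs ih =>
      obtain ⟨j, rfl⟩ := hs
      have hne : j.castSucc ≠ j.succ := (Fin.castSucc_lt_succ).ne
      have := prod_ofFn_swap_of_anticomm (fun l => f (τ l))
        (fun a b hab => hf _ _ (by simpa using hab)) j
      simp only [Equiv.Perm.coe_mul, Function.comp_apply]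
      rw [this, ih]
      simp [Equiv.Perm.sign_swap hne]

theorem Γgen_mul_self (r : ℕ) (i : Fin (2 * r)) : Γgen r i * Γgen r i = 1 := by
  have h : Qf r (Pi.single i 1) = 1 := by
    simp [Qf, QuadraticMap.weightedSumSquares_apply, Pi.single_apply]
  rw [Γgen, CliffordAlgebra.ι_sq_scalar, h, map_one]

theorem Γgen_anticomm (r : ℕ) {i j : Fin (2 * r)} (h : i ≠ j) :
    Γgen r i * Γgen r j = -(Γgen r j * Γgen r i) := by
  apply CliffordAlgebra.ι_mul_ι_comm_of_isOrtho
  simp only [QuadraticMap.isOrtho_def, Qf, QuadraticMap.weightedSumSquares_apply, one_smul,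
    ← Finset.sum_add_distrib]
  refine Finset.sum_congr rfl fun l _ => ?_
  by_cases hi : l = i
  · subst hi; simp [h]
  · simp [Pi.single_apply, hi]

theorem Γbr_of_injective (r k : ℕ) {i : Fin k → Fin (2 * r)} (hi : Function.Injective i) :
    Γbr r k i = (List.ofFn fun j => Γgen r (i j)).prod := by
  have h (σ : Equiv.Perm (Fin k)) :
      ((Equiv.Perm.sign σ : ℤ) : ℂ) • (List.ofFn fun j => Γgen r (i (σ j))).prod =
        (List.ofFn fun j => Γgen r (i j)).prod := by
    rw [prod_ofFn_perm_of_anticomm (fun j => Γgen r (i j))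
      (fun a b hab => Γgen_anticomm r (hi.ne hab))]
    rcases Int.units_eq_one_or (Equiv.Perm.sign σ) with hs | hs <;> simp [hs]
  have hk : (k.factorial : ℂ) ≠ 0 := by exact_mod_cast k.factorial_ne_zero
  simp only [Γbr, h]
  simp [Fintype.card_perm, ← Nat.cast_smul_eq_nsmul ℂ, smul_smul, hk]

theorem Γbr_of_not_injective (r k : ℕ) {i : Fin k → Fin (2 * r)} (hi : ¬ Function.Injective i) :
    Γbr r k i = 0 := by
  obtain ⟨a, b, hab, hne⟩ : ∃ a b, i a = i b ∧ a ≠ b := by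
    simpa [Function.Injective] using hi
  have hswap (l : Fin k) : i (Equiv.swap a b l) = i l := by
    rw [Equiv.swap_apply_def]; split_ifs <;> simp_all
  set S := ∑ σ : Equiv.Perm (Fin k),
    ((Equiv.Perm.sign σ : ℤ) : ℂ) • (List.ofFn fun j => Γgen r (i (σ j))).prod with hS
  have h : S = -S := by
    conv_lhs => rw [hS, ← Equiv.sum_comp (Equiv.mulLeft (Equiv.swap a b))]
    simp [hswap, Equiv.Perm.sign_swap hne, hS]
  have hS0 : S = 0 := by
    have h2 : (2 : ℂ) • S = 0 := by rw [two_smul]; nth_rewrite 1 [h]; simp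
    simpa using h2
  rw [Γbr, ← hS, hS0, smul_zero]

/-- The elements `Γ_i ⊗ Γ_i`. -/
def Γdiag (r : ℕ) (i : Fin (2 * r)) : Cl r ⊗[ℂ] Cl r := Γgen r i ⊗ₜ[ℂ] Γgen r i

theorem Γdiag_mul_self (r : ℕ) (i : Fin (2 * r)) : Γdiag r i * Γdiag r i = 1 := by
  simp [Γdiag, Γgen_mul_self, Algebra.TensorProduct.one_def]

theorem Γdiag_comm (r : ℕ) (i j : Fin (2 * r)) :
    Γdiag r i * Γdiag r j = Γdiag r j * Γdiag r i := by
  by_cases h : i = j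
  · rw [h]
  · simp [Γdiag, Γgen_anticomm r h, TensorProduct.neg_tmul, TensorProduct.tmul_neg]

theorem prod_ofFn_tmul_self {R A : Type*} [CommRing R] [Ring A] [Algebra R A] {k : ℕ}
    (f : Fin k → A) :
    (List.ofFn f).prod ⊗ₜ[R] (List.ofFn f).prod = (List.ofFn fun j => f j ⊗ₜ[R] f j).prod := by
  induction k with
  | zero => simp [Algebra.TensorProduct.one_def]
  | succ k ih =>
    simp only [List.ofFn_succ, List.prod_cons, ← ih]
    simp

open Classical in
theorem Ik_eq_sum_injective (r k : ℕ) :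
    Ik r k = ∑ i : Fin k → Fin (2 * r),
      if Function.Injective i then (List.ofFn fun j => Γdiag r (i j)).prod else 0 := by
  refine Finset.sum_congr rfl fun i _ => ?_
  split_ifs with h
  · rw [Γbr_of_injective r k h, prod_ofFn_tmul_self]; rfl
  · simp [Γbr_of_not_injective r k h]

theorem sum_fin_succ_fun {α M : Type*} [Fintype α] [AddCommMonoid M] {n : ℕ}
    (F : (Fin (n + 1) → α) → M) :
    ∑ i, F i = ∑ a, ∑ i : Fin n → α, F (Fin.cons a i) := by
  rw [← Equiv.sum_comp (Fin.consEquiv fun _ => α), Fintype.sum_prod_type]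
  rfl

theorem Ik_zero (r : ℕ) : Ik r 0 = 1 := by
  rw [Ik_eq_sum_injective]
  simp [Function.injective_of_subsingleton]

theorem Ik_two (r : ℕ) :
    Ik r 2 = ∑ a, ∑ b, if a = b then 0 else Γdiag r a * Γdiag r b := by
  rw [Ik_eq_sum_injective]
  simp [sum_fin_succ_fun, Fin.cons_injective_iff, Function.injective_of_subsingleton,
    List.ofFn_succ, eq_comm]

theorem Ik_four (r : ℕ) :
    Ik r 4 = ∑ d, ∑ c, ∑ b, ∑ a, if a = b ∨ a = c ∨ a = d ∨ b = c ∨ b = d ∨ c = d then 0 else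
      Γdiag r d * (Γdiag r c * (Γdiag r b * Γdiag r a)) := by
  rw [Ik_eq_sum_injective]
  simp only [sum_fin_succ_fun]
  simp [Fin.cons_injective_iff, Function.injective_of_subsingleton,
    List.ofFn_succ]
  refine Finset.sum_congr rfl fun d _ => Finset.sum_congr rfl fun c _ =>
    Finset.sum_congr rfl fun b _ => Finset.sum_congr rfl fun a _ => ?_
  rw [← ite_not]
  congr 1
  grind

theorem sum_distinct_two {ι B : Type*} [Fintype ι] [DecidableEq ι] [CommRing B] (u : ι → B)
    (hu : ∀ i, u i * u i = 1) :
    (∑ a, ∑ b, if a = b then 0 else u a * u b) = (∑ a, u a) ^ 2 - Fintype.card ι := by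
  have h (a b : ι) : (if a = b then 0 else u a * u b) = u a * u b - if a = b then 1 else 0 := by
    split_ifs with h
    · rw [← h, hu, sub_self]
    · simp
  simp [h, sq, Finset.sum_mul_sum]

theorem sum_distinct_four {ι B : Type*} [Fintype ι] [DecidableEq ι] [CommRing B] (u : ι → B)
    (hu : ∀ i, u i * u i = 1) :
    (∑ d, ∑ c, ∑ b, ∑ a, if a = b ∨ a = c ∨ a = d ∨ b = c ∨ b = d ∨ c = d then 0 else
      u d * (u c * (u b * u a))) =
      (∑ a, ∑ b, if a = b then 0 else u a * u b) ^ 2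
        - 4 * (Fintype.card ι - 2) * (∑ a, ∑ b, if a = b then 0 else u a * u b)
        - 2 * Fintype.card ι * (Fintype.card ι - 1) := by
  rw [sum_distinct_two u hu]
  set T := ∑ a, u a with hT
  set n : B := (Fintype.card ι : B) with hn
  have inner (d c b : ι) :
      (∑ a, if a = b ∨ a = c ∨ a = d ∨ b = c ∨ b = d ∨ c = d then 0 else
        u d * (u c * (u b * u a))) =
      if b = c ∨ b = d ∨ c = d then 0 else u d * u c * (u b * (T - u c - u d) - 1) := by
    split_ifs with h
    · simp [h]
    · push Not at h
      have (a : ι) : (if a = b ∨ a = c ∨ a = d ∨ b = c ∨ b = d ∨ c = d then 0 else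
          u d * (u c * (u b * u a))) = u d * u c * u b *
            (u a - (if a = b then u a else 0) - (if a = c then u a else 0)
              - (if a = d then u a else 0)) := by
        split_ifs <;> simp_all; ring
      simp only [this, ← Finset.mul_sum, Finset.sum_sub_distrib, Finset.sum_ite_eq',
        Finset.mem_univ, if_true, ← hT]
      linear_combination (-u d * u c) * hu b
  have middle (d c : ι) :
      (∑ b, if b = c ∨ b = d ∨ c = d then 0 else u d * u c * (u b * (T - u c - u d) - 1)) =
      if c = d then 0 else
        u d * u c * (T ^ 2 + 4 - n) - 2 * T * u c - 2 * T * u d + 2 := by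
    split_ifs with h
    · simp [h]
    · have (b : ι) : (if b = c ∨ b = d ∨ c = d then 0 else
          u d * u c * (u b * (T - u c - u d) - 1)) = u d * u c *
            ((u b - (if b = c then u b else 0) - (if b = d then u b else 0)) * (T - u c - u d)
              - (1 - (if b = c then 1 else 0) - (if b = d then 1 else 0))) := by
        split_ifs <;> simp_all
      simp only [this, ← Finset.mul_sum, Finset.sum_sub_distrib, Finset.sum_ite_eq',
        ← Finset.sum_mul, Finset.mem_univ, if_true, ← hT, Finset.sum_const, Finset.card_univ,
        nsmul_eq_mul, mul_one, ← hn]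
      linear_combination (-2 * T * u d + u d * u c + 2 * u d * u d) * hu c
        + (-2 * T * u c + u d * u c + 2) * hu d
  have outer (d c : ι) : (if c = d then 0 else
        u d * u c * (T ^ 2 + 4 - n) - 2 * T * u c - 2 * T * u d + 2) =
      (u d * u c * (T ^ 2 + 4 - n) - 2 * T * u c - 2 * T * u d + 2) -
        if c = d then (T ^ 2 + 4 - n) - 4 * T * u d + 2 else 0 := by
    split_ifs with h
    · subst h
      linear_combination (-(T ^ 2 + 4 - n)) * hu c
    · simp
  simp only [inner, middle, outer]
  simp only [Finset.sum_sub_distrib, Finset.sum_add_distrib, ← Finset.mul_sum, ← Finset.sum_mul,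
    Finset.sum_const, Finset.card_univ, nsmul_eq_mul, Finset.sum_ite_eq', Finset.mem_univ,
    if_true, ← hT, ← hn]
  ring

open scoped IsMulCommutative in
theorem Ik_four_eq (r : ℕ) :
    Ik r 4 = Ik r 2 ^ 2 - (8 * ((r : ℂ) - 1)) • Ik r 2 - (4 * (r : ℂ) * (2 * r - 1)) • 1 := by
  let s : Set (Cl r ⊗[ℂ] Cl r) := Set.range (Γdiag r)
  have hs : ∀ a ∈ s, ∀ b ∈ s, a * b = b * a := by
    rintro _ ⟨i, rfl⟩ _ ⟨j, rfl⟩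
    exact Γdiag_comm r i j
  have := Algebra.isMulCommutative_adjoin ℂ hs
  let u (i : Fin (2 * r)) : Algebra.adjoin ℂ s :=
    ⟨Γdiag r i, Algebra.subset_adjoin (Set.mem_range_self i)⟩
  have hu (i : Fin (2 * r)) : u i * u i = 1 := Subtype.ext (Γdiag_mul_self r i)
  have key := congrArg (Algebra.adjoin ℂ s).subtype (sum_distinct_four u hu)
  simp only [map_sum, map_sub, map_mul, map_pow, apply_ite (Algebra.adjoin ℂ s).subtype, map_zero,
    map_natCast, map_ofNat, map_one, Fintype.card_fin] at key
  have hval (i : Fin (2 * r)) : (Algebra.adjoin ℂ s).subtype (u i) = Γdiag r i := rfl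
  simp only [hval, ← Ik_four, ← Ik_two] at key
  have e1 : 8 * ((r : ℂ) - 1) = 4 * (((2 * r : ℕ) : ℂ) - 2) := by push_cast; ring
  have e2 : 4 * (r : ℂ) * (2 * r - 1) =
      2 * ((2 * r : ℕ) : ℂ) * (((2 * r : ℕ) : ℂ) - 1) := by push_cast; ring
  rw [key, e1, e2, Algebra.smul_def, Algebra.smul_def]
  simp only [map_mul, map_sub, map_ofNat, map_natCast, map_one, mul_one]

/-- `I₄ = 1024(r−1)²·Ĉ² + 256(r−1)²·Ĉ − 4r(2r−1)·I₀`. -/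
theorem I4_eq_poly_sC (r : ℕ) (hr : 2 ≤ r) :
    Ik r 4
      = ((1024:ℂ)*((r:ℂ)-1)^2) • (sC r)^2
        + ((256:ℂ)*((r:ℂ)-1)^2) • sC r
        - ((4:ℂ)*(r:ℂ)*(2*(r:ℂ)-1)) • Ik r 0 := by
  have h1 : (r : ℂ) - 1 ≠ 0 := by
    rw [sub_ne_zero]
    exact_mod_cast (by omega : r ≠ 1)
  have h2 : 2 * (r : ℂ) - 2 ≠ 0 := by
    rw [← mul_sub_one]; exact mul_ne_zero two_ne_zero h1
  rw [Ik_four_eq, Ik_zero, sC, smul_pow, smul_smul, smul_smul]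
  have e1 : (1024 * ((r : ℂ) - 1) ^ 2) * (-(16 * (2 * (r : ℂ) - 2))⁻¹) ^ 2 = 1 := by
    rw [← mul_sub_one]; field_simp; norm_num
  have e2 : (256 * ((r : ℂ) - 1) ^ 2) * (-(16 * (2 * (r : ℂ) - 2))⁻¹) = -(8 * ((r : ℂ) - 1)) := by
    rw [← mul_sub_one]; field_simp; norm_num
  rw [e1, e2, one_smul, neg_smul, ← sub_eq_add_neg]

end
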